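/- Let Ω be a finite nonempty set and t ∈ [1/2, 1) a rational number, written t = p/(p+q) with p, q positive integers. A selection function σ on Ω is represented for threshold t by some regular probability measure on Ω if and only if σ satisfies (S1), (S2), (S3), (S4ₙ) for every n ≥ 1, and the axiom (Scott[t]): whenever sequences (A_i)_{i≤n}, (B_i)_{i≤n} of subsets of Ω are t-balanced and A_i ⪰*_σ B_i for all i < n, then it is not the case that A_n = {a} for some a with a ≻_σ B_n. -/

import Mathlib

open Finset

variable {Ω : Type*}

/-- The measure of a finite set of states given weights `w`: `μ(A) = ∑_{ω ∈ A} w ω`. -/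
noncomputable def mea (w : Ω → ℝ) (A : Finset Ω) : ℝ := ∑ ω ∈ A, w ω

/-- `w` is a probability weight function: nonnegative and summing to 1. -/
def IsProbWeight [Fintype Ω] (w : Ω → ℝ) : Prop :=
  (∀ ω, 0 ≤ w ω) ∧ (∑ ω, w ω) = 1

/-- The measure is regular: only the empty set has measure 0. -/
def RegularW (w : Ω → ℝ) : Prop := ∀ X : Finset Ω, mea w X = 0 → X = ∅

/-- Conditional measure `μ_A(X) = μ(A ∩ X) / μ(A)`. -/
noncomputable def condMea [DecidableEq Ω] (w : Ω → ℝ) (A X : Finset Ω) : ℝ := mea w (A ∩ X) / mea w A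

/-- `X` is `(m,t)`-stable for a set function `m`: `X` is nonempty and for every `E` with
`X ∩ E ≠ ∅` and `m E > 0`, `m (X ∩ E) / m E > t`. -/
def StableFor [DecidableEq Ω] (m : Finset Ω → ℝ) (t : ℝ) (X : Finset Ω) : Prop :=
  X.Nonempty ∧ ∀ E : Finset Ω, (X ∩ E).Nonempty → 0 < m E → t < m (X ∩ E) / m E

/-- `S` is the `⊆`-least `(m,t)`-stable set. -/
def IsLeastStable [DecidableEq Ω] (m : Finset Ω → ℝ) (t : ℝ) (S : Finset Ω) : Prop :=
  StableFor m t S ∧ ∀ X : Finset Ω, StableFor m t X → S ⊆ X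

/-- `w` represents the selection function `σ` for threshold `t`. -/
def RepresentsAt [DecidableEq Ω] (w : Ω → ℝ) (t : ℝ) (σ : Finset Ω → Finset Ω) : Prop :=
  ∀ E : Finset Ω, (0 < mea w E → IsLeastStable (condMea w E) t (σ E)) ∧
    (mea w E = 0 → σ E = ∅)

/-- Selection axiom (S1): `σ(X) = ∅` only if `X = ∅`. -/
def SelA1 (σ : Finset Ω → Finset Ω) : Prop := ∀ X : Finset Ω, σ X = ∅ → X = ∅

/-- Selection axiom (S2): `σ(X) ⊆ X`. -/
def SelA2 (σ : Finset Ω → Finset Ω) : Prop := ∀ X : Finset Ω, σ X ⊆ X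

/-- Selection axiom (S3): if `σ(A) ∩ B ≠ ∅` then `σ(A ∩ B) ⊆ σ(A) ∩ B`. -/
def SelA3 [DecidableEq Ω] (σ : Finset Ω → Finset Ω) : Prop :=
  ∀ A B : Finset Ω, (σ A ∩ B).Nonempty → σ (A ∩ B) ⊆ σ A ∩ B

/-- Selection axiom (S4ₙ) for every `n`: if `σ(A ∪ Xᵢ) = Xᵢ` for all `i`, then
`σ(A ∪ ⋃ᵢ Xᵢ) ⊆ ⋃ᵢ Xᵢ`. -/
def SelA4 [DecidableEq Ω] (σ : Finset Ω → Finset Ω) : Prop :=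
  ∀ n : ℕ, ∀ A : Finset Ω, ∀ X : Fin (n + 1) → Finset Ω,
    (∀ i, σ (A ∪ X i) = X i) →
    σ (A ∪ univ.biUnion X) ⊆ univ.biUnion X

/-- `ω ≻_σ X` iff `ω ∉ X` and `σ (X ∪ {ω}) = {ω}`. -/
def succS [DecidableEq Ω] (σ : Finset Ω → Finset Ω) (ω : Ω) (X : Finset Ω) : Prop :=
  ω ∉ X ∧ σ (X ∪ {ω}) = {ω}

/-- `X ⪰_σ ω` iff `ω ∈ X` or `σ (X ∪ {ω}) ≠ {ω}`. -/
def succeqS [DecidableEq Ω] (σ : Finset Ω → Finset Ω) (X : Finset Ω) (ω : Ω) : Prop :=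
  ω ∈ X ∨ σ (X ∪ {ω}) ≠ {ω}

/-- `A ⪰*_σ B` iff either `A` is a singleton `{a}` with `a ≻_σ B`, or `B` is a singleton
`{b}` with `A ⪰_σ b`. -/
def geStar [DecidableEq Ω] (σ : Finset Ω → Finset Ω) (A B : Finset Ω) : Prop :=
  (∃ a, A = {a} ∧ succS σ a B) ∨ (∃ b, B = {b} ∧ succeqS σ A b)

/-- Two sequences of sets are balanced: every state occurs in exactly as many `A i`'s
as `B i`'s. -/
def BalancedSeq {n : ℕ} (A B : Fin n → Finset Ω) : Prop :=
  ∀ ω : Ω, Nat.card {i // ω ∈ A i} = Nat.card {i // ω ∈ B i}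

/-- `(A_i) ≤₀ (B_i)`: every state occurs in at most as many `A i`'s as `B i`'s. -/
def DomSeq {n : ℕ} (A B : Fin n → Finset Ω) : Prop :=
  ∀ ω : Ω, Nat.card {i // ω ∈ A i} ≤ Nat.card {i // ω ∈ B i}

/-- The (Scott) axiom for the induced order `⪰*_σ`. -/
def ScottAx [DecidableEq Ω] (σ : Finset Ω → Finset Ω) : Prop :=
  ∀ n : ℕ, ∀ A B : Fin (n + 1) → Finset Ω, BalancedSeq A B →
    (∀ i, geStar σ (A i) (B i)) → ∀ i, geStar σ (B i) (A i)

/-- Index classification for `t`-balancedness: index data `(A, B)` is *strict* when `A` is a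
singleton `{a}` with `a ≻_σ B`. -/
def StrictIdx [DecidableEq Ω] (σ : Finset Ω → Finset Ω) (A B : Finset Ω) : Prop :=
  ∃ a, A = {a} ∧ succS σ a B

/-- Index data `(A, B)` is *weak* when it is not strict and `B` is a singleton `{b}` with
`A ⪰_σ b`. -/
def WeakIdx [DecidableEq Ω] (σ : Finset Ω → Finset Ω) (A B : Finset Ω) : Prop :=
  ¬ StrictIdx σ A B ∧ ∃ b, B = {b} ∧ succeqS σ A b

/-- `t`-balancedness of two sequences of events, for `t = p / (p + q)`. -/
def TBalanced [DecidableEq Ω] (σ : Finset Ω → Finset Ω) (p q : ℕ) {n : ℕ}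
    (A B : Fin n → Finset Ω) : Prop :=
  ∀ ω : Ω,
    q * Nat.card {i // ω ∈ A i ∧ StrictIdx σ (A i) (B i)} +
        p * Nat.card {i // ω ∈ A i ∧ WeakIdx σ (A i) (B i)} =
      p * Nat.card {i // ω ∈ B i ∧ StrictIdx σ (A i) (B i)} +
        q * Nat.card {i // ω ∈ B i ∧ WeakIdx σ (A i) (B i)}

/-- Farkas' lemma over the rationals (Bartl's inductive proof). -/
theorem farkasQ {ι W : Type*} [AddCommGroup W] [Module ℚ W] [DecidableEq ι] (s : Finset ι) :
    ∀ (f : ι → W →ₗ[ℚ] ℚ) (b : W →ₗ[ℚ] ℚ),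
      (∀ x, (∀ i ∈ s, 0 ≤ f i x) → 0 ≤ b x) →
      ∃ c : ι → ℚ, (∀ i, 0 ≤ c i) ∧ ∀ x, b x = ∑ i ∈ s, c i * f i x := by
  induction s using Finset.induction_on with
  | empty =>
    intro f b h
    refine ⟨fun _ => 0, fun _ => le_rfl, fun x => ?_⟩
    have h1 := h x (by simp)
    have h2 := h (-x) (by simp)
    rw [map_neg] at h2
    simp
    linarith
  | insert j s hj ih =>
    intro f b h
    by_cases hs : ∀ x, (∀ i ∈ s, 0 ≤ f i x) → 0 ≤ b x
    · obtain ⟨c, hc, hb⟩ := ih f b hs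
      refine ⟨fun i => if i = j then 0 else c i, fun i => ?_, fun x => ?_⟩
      · dsimp only
        split_ifs
        · exact le_rfl
        · exact hc i
      · rw [Finset.sum_insert hj, hb x]
        simp only [if_true, zero_mul, zero_add]
        refine Finset.sum_congr rfl fun i hi => ?_
        have : i ≠ j := fun e => hj (e ▸ hi)
        simp [this]
    · push Not at hs
      obtain ⟨y, hy, hby⟩ := hs
      have hjy : f j y < 0 := by
        by_contra hcon
        push Not at hcon
        have := h y (by
          intro i hi
          rcases Finset.mem_insert.1 hi with rfl | hi
          · exact hcon
          · exact hy i hi)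
        linarith
      set k : ℚ := -(f j y)⁻¹ with hk
      have hk0 : 0 < k := by
        rw [hk]
        have := inv_lt_zero.2 hjy
        linarith
      have hkj : k * f j y = -1 := by
        rw [hk, neg_mul, inv_mul_cancel₀ hjy.ne]
      obtain ⟨c, hc, hb⟩ := ih (fun i => f i + (k * f i y) • f j) (b + (k * b y) • f j) (by
        intro x hx
        have := h (x + (k * f j x) • y) (by
          intro i hi
          rcases Finset.mem_insert.1 hi with rfl | hi
          · simp only [map_add, map_smul, smul_eq_mul]
            have : f i x + k * f i x * f i y = f i x * (1 + k * f i y) := by ring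
            rw [this, hkj]; simp
          · have := hx i hi
            simp only [map_add, map_smul, smul_eq_mul, LinearMap.add_apply, LinearMap.smul_apply] at this ⊢
            linarith)
        simp only [map_add, map_smul, smul_eq_mul, LinearMap.add_apply, LinearMap.smul_apply] at this ⊢
        linarith)
      have hd : 0 ≤ (∑ i ∈ s, c i * (k * f i y)) - k * b y := by
        have h1 : 0 ≤ ∑ i ∈ s, c i * (k * f i y) :=
          Finset.sum_nonneg fun i hi => mul_nonneg (hc i) (mul_nonneg hk0.le (hy i hi))
        have h2 : k * b y < 0 := mul_neg_of_pos_of_neg hk0 hby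
        linarith
      refine ⟨fun i => if i = j then (∑ i ∈ s, c i * (k * f i y)) - k * b y else c i,
        fun i => ?_, fun x => ?_⟩
      · dsimp only
        split_ifs
        · exact hd
        · exact hc i
      · rw [Finset.sum_insert hj]
        have h3 : ∑ i ∈ s, (if i = j then (∑ i ∈ s, c i * (k * f i y)) - k * b y else c i) * f i x
            = ∑ i ∈ s, c i * f i x := by
          refine Finset.sum_congr rfl fun i hi => ?_
          have : i ≠ j := fun e => hj (e ▸ hi)
          simp [this]
        rw [h3]
        have h4 := hb x
        simp only [LinearMap.add_apply, LinearMap.smul_apply, smul_eq_mul, mul_add,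
          Finset.sum_add_distrib] at h4
        have h5 : ∑ i ∈ s, c i * (k * f i y * f j x) = (∑ i ∈ s, c i * (k * f i y)) * f j x := by
          rw [Finset.sum_mul]
          exact Finset.sum_congr rfl fun i _ => by ring
        rw [h5] at h4
        simp only [if_true]
        linarith

/-- Clearing denominators. -/
theorem clearDen {ι : Type*} (s : Finset ι) (c : ι → ℚ) (hc : ∀ i, 0 ≤ c i) :
    ∃ D : ℕ, 0 < D ∧ ∃ m : ι → ℕ, ∀ i ∈ s, (m i : ℚ) = D * c i := by
  classical
  induction s using Finset.induction_on with
  | empty => exact ⟨1, one_pos, fun _ => 0, by simp⟩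
  | insert j s hj ih =>
    obtain ⟨D, hD, m, hm⟩ := ih
    refine ⟨D * (c j).den, Nat.mul_pos hD (c j).den_pos,
      fun i => if i = j then D * (c j).num.toNat else m i * (c j).den, fun i hi => ?_⟩
    rcases Finset.mem_insert.1 hi with rfl | hi
    · have h1 : (((c i).num.toNat : ℤ) : ℚ) = (c i).num := by
        rw [Int.toNat_of_nonneg (Rat.num_nonneg.2 (hc i))]
      have h2 : ((c i).den : ℚ) * c i = (c i).num := by
        rw [mul_comm]; exact Rat.mul_den_eq_num _
      simp only [if_true]
      push_cast at h1 ⊢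
      rw [h1, mul_assoc, h2]
    · have : i ≠ j := fun e => hj (e ▸ hi)
      simp only [this, if_false]
      push_cast
      rw [hm i hi]; ring

/-- Motzkin transposition with natural number coefficients. -/
theorem motzkinQ {ι Ω : Type*} [Fintype Ω] [Fintype ι] [DecidableEq ι]
    (S : ι → Prop) (v : ι → Ω → ℤ)
    (h : ∀ m : ι → ℕ, (∀ ω, ∑ i, (m i : ℤ) * v i ω = 0) → ∀ i, S i → m i = 0) :
    ∃ w : Ω → ℚ, ∀ i, 0 ≤ ∑ ω, v i ω * w ω ∧ (S i → 0 < ∑ ω, v i ω * w ω) := by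
  classical
  by_contra hno
  let f : ι → ((Ω → ℚ) × ℚ) →ₗ[ℚ] ℚ := fun i =>
    (∑ ω, (v i ω : ℚ) • ((LinearMap.proj ω : (Ω → ℚ) →ₗ[ℚ] ℚ).comp (LinearMap.fst ℚ (Ω → ℚ) ℚ)))
      - (if S i then (1 : ℚ) else 0) • LinearMap.snd ℚ (Ω → ℚ) ℚ
  have hf : ∀ i w r, f i (w, r) = ∑ ω, v i ω * w ω - (if S i then r else 0) := by
    intro i w r
    by_cases hS : S i <;> simp [f, hS]
  obtain ⟨c, hc, hb⟩ := farkasQ Finset.univ f (-LinearMap.snd ℚ (Ω → ℚ) ℚ) (by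
    rintro ⟨w, r⟩ hx
    by_contra hr
    simp at hr
    refine hno ⟨w, fun i => ?_⟩
    have := hx i (mem_univ i)
    rw [hf] at this
    by_cases hS : S i
    · simp only [hS, if_true] at this
      exact ⟨by linarith, fun _ => by linarith⟩
    · simp only [hS, if_false] at this
      exact ⟨by linarith, fun h => absurd h hS⟩)
  obtain ⟨D, hD, m, hm⟩ := clearDen Finset.univ c hc
  have hz := h m (by
    intro ω
    have h1 := hb (Pi.single ω 1, 0)
    simp only [hf] at h1
    simp [Pi.single_apply] at h1
    have : ((∑ i, (m i : ℤ) * v i ω : ℤ) : ℚ) = 0 := by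
      push_cast
      have : ∀ i, (m i : ℚ) * v i ω = D * (c i * v i ω) := by
        intro i; rw [hm i (mem_univ i)]; ring
      simp only [this]
      rw [← Finset.mul_sum, ← h1, mul_zero]
    exact_mod_cast this)
  have h2 := hb (0, 1)
  simp only [hf] at h2
  simp at h2
  have h3 : ∑ i, (if S i then c i else 0) = 0 := by
    refine Finset.sum_eq_zero fun i _ => ?_
    split_ifs with hS
    · have h4 := hm i (mem_univ i)
      rw [hz i hS] at h4
      have : (D : ℚ) ≠ 0 := by positivity
      simpa [this] using h4.symm
    · rfl
  rw [Finset.sum_ite] at h3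
  simp at h3
  first
  | linarith
  | (simp [Finset.sum_ite] at h2; linarith)

open Classical in
/-- Signed contribution of an index. -/
noncomputable def contrib {Ω : Type*} [DecidableEq Ω] (σ : Finset Ω → Finset Ω) (p q : ℕ)
    (P : Finset Ω × Finset Ω) (ω : Ω) : ℤ :=
  (if StrictIdx σ P.1 P.2 then
      (q : ℤ) * (if ω ∈ P.1 then 1 else 0) - p * (if ω ∈ P.2 then 1 else 0) else 0) +
  (if WeakIdx σ P.1 P.2 then
      (p : ℤ) * (if ω ∈ P.1 then 1 else 0) - q * (if ω ∈ P.2 then 1 else 0) else 0)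

theorem tBalanced_iff {Ω : Type*} [DecidableEq Ω] (σ : Finset Ω → Finset Ω) (p q : ℕ) {n : ℕ}
    (A B : Fin n → Finset Ω) :
    TBalanced σ p q A B ↔ ∀ ω, ∑ i, contrib σ p q (A i, B i) ω = 0 := by
  classical
  unfold TBalanced
  refine forall_congr' fun ω => ?_
  have key : ∀ (C : Fin n → Prop) (D : Fin n → Prop),
      ((Nat.card {i // C i ∧ D i} : ℕ) : ℤ) = ∑ i, if D i then (if C i then 1 else 0) else 0 := by
    intro C D
    rw [Nat.card_eq_fintype_card, Fintype.card_subtype, Finset.card_filter]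
    push_cast
    refine Finset.sum_congr rfl fun i _ => ?_
    by_cases h1 : C i <;> by_cases h2 : D i <;> simp [h1, h2]
  rw [← Int.natCast_inj]
  push_cast
  simp only [key, Finset.mul_sum]
  rw [← sub_eq_zero, ← Finset.sum_add_distrib, ← Finset.sum_add_distrib, ← Finset.sum_sub_distrib]
  refine Eq.congr (Finset.sum_congr rfl fun i _ => ?_) rfl
  unfold contrib
  dsimp only
  split_ifs <;> ring

theorem contrib_sum {Ω : Type*} [Fintype Ω] [DecidableEq Ω] (σ : Finset Ω → Finset Ω) (p q : ℕ)
    (P : Finset Ω × Finset Ω) (w : Ω → ℝ) :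
    (StrictIdx σ P.1 P.2 → ∑ ω, (contrib σ p q P ω : ℝ) * w ω = q * mea w P.1 - p * mea w P.2) ∧
    (WeakIdx σ P.1 P.2 → ∑ ω, (contrib σ p q P ω : ℝ) * w ω = p * mea w P.1 - q * mea w P.2) := by
  classical
  have hm : ∀ X : Finset Ω, mea w X = ∑ ω, if ω ∈ X then w ω else 0 := by
    intro X; simp [mea]
  constructor
  · intro hS
    have hW : ¬ WeakIdx σ P.1 P.2 := fun h => h.1 hS
    rw [hm, hm, Finset.mul_sum, Finset.mul_sum, ← Finset.sum_sub_distrib]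
    refine Finset.sum_congr rfl fun ω _ => ?_
    simp only [contrib, hS, hW, if_true, if_false]
    split_ifs <;> push_cast <;> ring
  · intro hW
    have hS : ¬ StrictIdx σ P.1 P.2 := hW.1
    rw [hm, hm, Finset.mul_sum, Finset.mul_sum, ← Finset.sum_sub_distrib]
    refine Finset.sum_congr rfl fun ω _ => ?_
    simp only [contrib, hS, hW, if_true, if_false]
    split_ifs <;> push_cast <;> ring

theorem mea_mono' {Ω : Type*} {w : Ω → ℝ} (hw : ∀ ω, 0 < w ω) {X Y : Finset Ω} (h : X ⊆ Y) :
    mea w X ≤ mea w Y :=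
  Finset.sum_le_sum_of_subset_of_nonneg h fun i _ _ => (hw i).le

theorem mea_pos' {Ω : Type*} {w : Ω → ℝ} (hw : ∀ ω, 0 < w ω) {X : Finset Ω} (h : X.Nonempty) :
    0 < mea w X := Finset.sum_pos (fun i _ => hw i) h

theorem mea_nonneg' {Ω : Type*} {w : Ω → ℝ} (hw : ∀ ω, 0 < w ω) (X : Finset Ω) :
    0 ≤ mea w X := Finset.sum_nonneg (fun i _ => (hw i).le)

theorem ratio_iff {p q : ℕ} (hp : 0 < p) (hq : 0 < q) {a b : ℝ} (hab : 0 < a + b) :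
    (p : ℝ) / (p + q) < a / (a + b) ↔ p * b < q * a := by
  have : (0 : ℝ) < p + q := by positivity
  rw [div_lt_div_iff₀ this hab]
  constructor <;> intro h <;> nlinarith

/-- Characterization of stable subsets. -/
theorem stable_iff {Ω : Type*} [DecidableEq Ω] {w : Ω → ℝ} (hw : ∀ ω, 0 < w ω) {p q : ℕ}
    (hp : 0 < p) (hq : 0 < q) {E X : Finset Ω} (hX : X ⊆ E) :
    StableFor (condMea w E) ((p : ℝ) / (p + q)) X ↔
      X.Nonempty ∧ ∀ x ∈ X, p * mea w (E \ X) < q * w x := by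
  unfold StableFor
  refine and_congr_right fun hne => ?_
  have hE : 0 < mea w E := mea_pos' hw (hne.mono hX)
  have hr : ∀ F, condMea w E (X ∩ F) / condMea w E F = mea w (X ∩ F) / (mea w (X ∩ F) + mea w ((E \ X) ∩ F)) := by
    intro F
    have h1 : mea w (E ∩ F) = mea w (X ∩ F) + mea w ((E \ X) ∩ F) := by
      unfold mea
      rw [← Finset.sum_union]
      · congr 1
        ext a
        have := @hX a
        simp only [mem_inter, mem_union, mem_sdiff]
        tauto
      · rw [Finset.disjoint_left]
        intro a
        simp only [mem_inter, mem_sdiff]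
        tauto
    have h2 : E ∩ (X ∩ F) = X ∩ F := by
      rw [← Finset.inter_assoc, Finset.inter_eq_right.2 hX]
    unfold condMea
    rw [h2, h1, div_div_div_cancel_right₀ hE.ne']
  constructor
  · intro h x hx
    have hXF : X ∩ insert x (E \ X) = {x} := by
      ext a
      simp only [mem_inter, mem_insert, mem_sdiff, mem_singleton]
      constructor
      · tauto
      · rintro rfl; tauto
    have hEF : (E \ X) ∩ insert x (E \ X) = E \ X :=
      Finset.inter_eq_left.2 (Finset.subset_insert _ _)
    have h1 := h (insert x (E \ X)) (by rw [hXF]; simp) (by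
      unfold condMea
      refine div_pos (mea_pos' hw ⟨x, ?_⟩) hE
      simp [hX hx])
    rw [hr, hXF, hEF, ratio_iff hp hq] at h1
    · simpa [mea] using h1
    · have := mea_pos' hw (Finset.singleton_nonempty x)
      have := mea_nonneg' hw (E \ X)
      linarith
  · intro h F hF _
    have h0 := mea_pos' hw hF
    have h1 := mea_nonneg' hw ((E \ X) ∩ F)
    rw [hr, ratio_iff hp hq (by linarith)]
    obtain ⟨x, hx⟩ := hF
    have h2 := h x (Finset.mem_inter.1 hx).1
    have h3 : mea w ((E \ X) ∩ F) ≤ mea w (E \ X) := mea_mono' hw Finset.inter_subset_left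
    have h4 : w x ≤ mea w (X ∩ F) := by
      have := mea_mono' hw (Finset.singleton_subset_iff.2 hx)
      simpa [mea] using this
    have hp' : (0 : ℝ) < p := by exact_mod_cast hp
    have hq' : (0 : ℝ) < q := by exact_mod_cast hq
    calc (p : ℝ) * mea w ((E \ X) ∩ F) ≤ p * mea w (E \ X) := by gcongr
      _ < q * w x := h2
      _ ≤ q * mea w (X ∩ F) := by gcongr

/-- A stable set is comparable to the conditioning set. -/
theorem stable_cases {Ω : Type*} [DecidableEq Ω] {w : Ω → ℝ} (hw : ∀ ω, 0 < w ω) {t : ℝ}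
    (ht : 0 ≤ t) {E X : Finset Ω} (h : StableFor (condMea w E) t X) : X ⊆ E ∨ E ⊆ X := by
  by_contra hcon
  push Not at hcon
  obtain ⟨h1, h2⟩ := hcon
  obtain ⟨x, hx, hxE⟩ := Finset.not_subset.1 h1
  obtain ⟨y, hy, hyX⟩ := Finset.not_subset.1 h2
  have := h.2 {x, y} ⟨x, by simp [hx]⟩ (by
    unfold condMea
    exact div_pos (mea_pos' hw ⟨y, by simp [hy]⟩) (mea_pos' hw ⟨y, hy⟩))
  have he : E ∩ (X ∩ {x, y}) = ∅ := by
    ext a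
    simp only [mem_inter, mem_insert, mem_singleton, notMem_empty, iff_false]
    rintro ⟨h1, h2, rfl | rfl⟩ <;> contradiction
  unfold condMea at this
  rw [he] at this
  simp [mea] at this
  linarith

theorem sel_spec {Ω : Type*} [DecidableEq Ω] {w : Ω → ℝ} (hw : ∀ ω, 0 < w ω) {p q : ℕ}
    (hp : 0 < p) (hq : 0 < q) (σ : Finset Ω → Finset Ω) :
    RepresentsAt w ((p : ℝ) / (p + q)) σ ↔
      σ ∅ = ∅ ∧ ∀ E : Finset Ω, E.Nonempty → σ E ⊆ E ∧ (σ E).Nonempty ∧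
        (∀ x ∈ σ E, p * mea w (E \ σ E) < q * w x) ∧
        ∀ X ⊆ E, X.Nonempty → (∀ x ∈ X, p * mea w (E \ X) < q * w x) → σ E ⊆ X := by
  have hq' : (0 : ℝ) < q := by exact_mod_cast hq
  constructor
  · intro h
    refine ⟨(h ∅).2 (by simp [mea]), fun E hE => ?_⟩
    obtain ⟨h1, h2⟩ := (h E).1 (mea_pos' hw hE)
    have hsub : σ E ⊆ E := h2 E ((stable_iff hw hp hq Subset.rfl).2 ⟨hE, fun x _ => by
      have := mul_pos hq' (hw x)
      simpa [mea] using this⟩)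
    have h3 := (stable_iff hw hp hq hsub).1 h1
    exact ⟨hsub, h3.1, h3.2, fun X hX hne hx => h2 X ((stable_iff hw hp hq hX).2 ⟨hne, hx⟩)⟩
  · rintro ⟨h0, h⟩ E
    constructor
    · intro hpos
      have hE : E.Nonempty := by
        by_contra hcon
        rw [Finset.not_nonempty_iff_eq_empty] at hcon
        simp [hcon, mea] at hpos
      obtain ⟨h1, h2, h3, h4⟩ := h E hE
      refine ⟨(stable_iff hw hp hq h1).2 ⟨h2, h3⟩, fun X hX => ?_⟩
      rcases stable_cases hw (by positivity) hX with hc | hc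
      · obtain ⟨h5, h6⟩ := (stable_iff hw hp hq hc).1 hX
        exact h4 X hc h5 h6
      · exact h1.trans hc
    · intro hz
      by_cases hE : E.Nonempty
      · have := mea_pos' hw hE
        linarith
      · rw [Finset.not_nonempty_iff_eq_empty] at hE
        rw [hE, h0]

/-- Under a representing measure, `≻` is a strict comparison. -/
theorem succS_iff {Ω : Type*} [DecidableEq Ω] {w : Ω → ℝ} (hw : ∀ ω, 0 < w ω) {p q : ℕ}
    (hp : 0 < p) (hq : 0 < q) {σ : Finset Ω → Finset Ω}
    (h : RepresentsAt w ((p : ℝ) / (p + q)) σ) {a : Ω} {B : Finset Ω} (ha : a ∉ B) :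
    σ (B ∪ {a}) = {a} ↔ p * mea w B < q * w a := by
  obtain ⟨-, h⟩ := (sel_spec hw hp hq σ).1 h
  obtain ⟨h1, h2, h3, h4⟩ := h (B ∪ {a}) ⟨a, by simp⟩
  have hd : (B ∪ {a}) \ {a} = B := by
    ext x
    simp only [mem_sdiff, mem_union, mem_singleton]
    constructor
    · tauto
    · intro hx
      exact ⟨Or.inl hx, fun e => ha (e ▸ hx)⟩
  constructor
  · intro he
    rw [he, hd] at h3
    exact h3 a (by simp)
  · intro hlt
    have := h4 {a} (by simp) (by simp) (by
      intro x hx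
      rw [Finset.mem_singleton.1 hx, hd]; exact hlt)
    exact (Finset.Nonempty.subset_singleton_iff h2).1 this

theorem forwardDir {Ω : Type*} [Fintype Ω] [DecidableEq Ω] {w : Ω → ℝ} (hw : ∀ ω, 0 < w ω)
    {p q : ℕ} (hp : 0 < p) (hq : 0 < q) (hpq : q ≤ p) {σ : Finset Ω → Finset Ω}
    (hR : RepresentsAt w ((p : ℝ) / (p + q)) σ) :
    (SelA1 σ ∧ SelA2 σ ∧ SelA3 σ ∧ SelA4 σ ∧
        (∀ n : ℕ, ∀ A B : Fin (n + 1) → Finset Ω, TBalanced σ p q A B →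
          (∀ i : Fin n, geStar σ (A i.castSucc) (B i.castSucc)) →
          ¬ StrictIdx σ (A (Fin.last n)) (B (Fin.last n)))) := by
  obtain ⟨h0, h⟩ := (sel_spec hw hp hq σ).1 hR
  have hp' : (0 : ℝ) < p := by exact_mod_cast hp
  have hq' : (0 : ℝ) < q := by exact_mod_cast hq
  have hpq' : (q : ℝ) ≤ p := by exact_mod_cast hpq
  have hS1 : SelA1 σ := by
    intro X hX
    by_contra hne
    obtain ⟨-, h2, -⟩ := h X (Finset.nonempty_iff_ne_empty.2 hne)
    exact h2.ne_empty hX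
  have hS2 : SelA2 σ := by
    intro X
    rcases X.eq_empty_or_nonempty with rfl | hne
    · rw [h0]
    · exact (h X hne).1
  refine ⟨hS1, hS2, ?_, ?_, ?_⟩
  · intro A B hne
    have hA : A.Nonempty := by
      obtain ⟨x, hx⟩ := hne
      exact ⟨x, hS2 A (Finset.mem_inter.1 hx).1⟩
    obtain ⟨h1, h2, h3, -⟩ := h A hA
    have hsub : σ A ∩ B ⊆ A ∩ B := Finset.inter_subset_inter_right h1
    refine (h (A ∩ B) (hne.mono hsub)).2.2.2 _ hsub hne fun x hx => ?_
    refine lt_of_le_of_lt ?_ (h3 x (Finset.mem_inter.1 hx).1)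
    have : mea w ((A ∩ B) \ (σ A ∩ B)) ≤ mea w (A \ σ A) := mea_mono' hw (by
      intro a
      simp only [mem_inter, mem_sdiff]
      tauto)
    gcongr
  · intro n A X hX
    rcases (univ.biUnion X).eq_empty_or_nonempty with he | hne
    · have hX0 : X 0 = ∅ := by
        rw [← Finset.subset_empty, ← he]
        exact Finset.subset_biUnion_of_mem X (mem_univ 0)
      have h1 := hX 0
      rw [hX0] at h1
      have h2 := hS1 _ h1
      rw [he, h2, h0]
    · refine (h _ (hne.mono Finset.subset_union_right)).2.2.2 _ Finset.subset_union_right hne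
        fun x hx => ?_
      obtain ⟨i, -, hi⟩ := Finset.mem_biUnion.1 hx
      have h3 := (h (A ∪ X i) ⟨x, by simp [hi]⟩).2.2.1
      rw [hX i] at h3
      refine lt_of_le_of_lt ?_ (h3 x hi)
      have : mea w ((A ∪ univ.biUnion X) \ univ.biUnion X) ≤ mea w ((A ∪ X i) \ X i) :=
        mea_mono' hw (by
          intro a ha
          have hs : X i ⊆ univ.biUnion X := Finset.subset_biUnion_of_mem X (mem_univ i)
          have := @hs a
          simp only [mem_sdiff, mem_union] at ha ⊢
          tauto)
      gcongr
  · intro n A B hbal hge hlast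
    rw [tBalanced_iff] at hbal
    have hstrict : ∀ P : Finset Ω × Finset Ω, StrictIdx σ P.1 P.2 →
        0 < ∑ ω, (contrib σ p q P ω : ℝ) * w ω := by
      intro P hP
      rw [(contrib_sum σ p q P w).1 hP]
      obtain ⟨a, ha, hn, hs⟩ := hP
      rw [succS_iff hw hp hq hR hn] at hs
      rw [ha]
      simp only [mea, Finset.sum_singleton] at hs ⊢
      linarith
    have hweak : ∀ P : Finset Ω × Finset Ω, WeakIdx σ P.1 P.2 →
        0 ≤ ∑ ω, (contrib σ p q P ω : ℝ) * w ω := by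
      intro P hP
      rw [(contrib_sum σ p q P w).2 hP]
      obtain ⟨-, b, hb, hs⟩ := hP
      have hm : mea w P.2 = w b := by rw [hb]; simp [mea]
      rw [hm]
      by_cases hbA : b ∈ P.1
      · have h1 := mea_mono' hw (Finset.singleton_subset_iff.2 hbA)
        simp only [mea, Finset.sum_singleton] at h1
        have h2 := (hw b).le
        simp only [mea]
        nlinarith
      · have hs' := hs.resolve_left hbA
        rw [Ne, succS_iff hw hp hq hR hbA] at hs'
        linarith
    have hsum : ∑ i, ∑ ω, (contrib σ p q (A i, B i) ω : ℝ) * w ω = 0 := by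
      rw [Finset.sum_comm]
      refine Finset.sum_eq_zero fun ω _ => ?_
      rw [← Finset.sum_mul]
      have : ((∑ i, contrib σ p q (A i, B i) ω : ℤ) : ℝ) = 0 := by rw [hbal ω]; simp
      push_cast at this
      rw [this, zero_mul]
    rw [Fin.sum_univ_castSucc] at hsum
    have h1 := hstrict (A (Fin.last n), B (Fin.last n)) hlast
    have h2 : 0 ≤ ∑ i : Fin n, ∑ ω, (contrib σ p q (A i.castSucc, B i.castSucc) ω : ℝ) * w ω := by
      refine Finset.sum_nonneg fun i _ => ?_
      by_cases hs : StrictIdx σ (A i.castSucc) (B i.castSucc)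
      · exact (hstrict (_, _) hs).le
      · exact hweak (_, _) ⟨hs, (hge i).resolve_left hs⟩
    linarith

/-- Existence of weights from the Scott axiom. -/
theorem scottWeights {Ω : Type*} [Fintype Ω] [DecidableEq Ω]
    {p q : ℕ} {σ : Finset Ω → Finset Ω}
    (hSc : ∀ n : ℕ, ∀ A B : Fin (n + 1) → Finset Ω, TBalanced σ p q A B →
          (∀ i : Fin n, geStar σ (A i.castSucc) (B i.castSucc)) →
          ¬ StrictIdx σ (A (Fin.last n)) (B (Fin.last n))) :
    ∃ w : Ω → ℝ, ∀ P : Finset Ω × Finset Ω,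
      (StrictIdx σ P.1 P.2 → p * mea w P.2 < q * mea w P.1) ∧
      (WeakIdx σ P.1 P.2 → q * mea w P.2 ≤ p * mea w P.1) := by
  classical
  let ι := {P : Finset Ω × Finset Ω // geStar σ P.1 P.2}
  obtain ⟨w, hw⟩ := motzkinQ (ι := ι) (fun P => StrictIdx σ P.1.1 P.1.2)
    (fun P => contrib σ p q P.1) (by
      intro m hm i0 hi0
      by_contra hne
      have hlt : 0 < m i0 := Nat.pos_of_ne_zero hne
      let T := Σ i : ι, Fin (m i)
      obtain ⟨n, hn⟩ : ∃ n, Fintype.card T = n + 1 := by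
        have : 0 < Fintype.card T := Fintype.card_pos_iff.2 ⟨⟨i0, ⟨0, hlt⟩⟩⟩
        exact ⟨Fintype.card T - 1, by omega⟩
      let e0 : T ≃ Fin (n + 1) := Fintype.equivFinOfCardEq hn
      let t0 : T := ⟨i0, ⟨0, hlt⟩⟩
      let e : Fin (n + 1) ≃ T := (Equiv.swap (Fin.last n) (e0 t0)).trans e0.symm
      have he : e (Fin.last n) = t0 := by simp [e]
      refine hSc n (fun k => (e k).1.1.1) (fun k => (e k).1.1.2) ?_ (fun i => (e _).1.2) ?_
      · rw [tBalanced_iff]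
        intro ω
        have h1 : ∑ k, contrib σ p q ((e k).1.1.1, (e k).1.1.2) ω
            = ∑ x : T, contrib σ p q x.1.1 ω :=
          Equiv.sum_comp e (fun x : T => contrib σ p q x.1.1 ω)
        rw [h1, ← hm ω, Fintype.sum_sigma]
        simp
      · rw [he]
        exact hi0)
  refine ⟨fun ω => (w ω : ℝ), fun P => ⟨fun hP => ?_, fun hP => ?_⟩⟩
  · have h1 := (hw ⟨P, Or.inl hP⟩).2 hP
    have h2 := (contrib_sum σ p q P (fun ω => (w ω : ℝ))).1 hP
    have h3 : (0 : ℝ) < ∑ ω, (contrib σ p q P ω : ℝ) * w ω := by exact_mod_cast h1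
    linarith
  · have h1 := (hw ⟨P, Or.inr hP.2⟩).1
    have h2 := (contrib_sum σ p q P (fun ω => (w ω : ℝ))).2 hP
    have h3 : (0 : ℝ) ≤ ∑ ω, (contrib σ p q P ω : ℝ) * w ω := by exact_mod_cast h1
    linarith

theorem backwardDir {Ω : Type*} [Fintype Ω] [DecidableEq Ω] [Nonempty Ω]
    {p q : ℕ} (hp : 0 < p) (hq : 0 < q) (hpq : q ≤ p) {σ : Finset Ω → Finset Ω}
    (hS1 : SelA1 σ) (hS2 : SelA2 σ) (hS3 : SelA3 σ) (hS4 : SelA4 σ)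
    (hSc : ∀ n : ℕ, ∀ A B : Fin (n + 1) → Finset Ω, TBalanced σ p q A B →
          (∀ i : Fin n, geStar σ (A i.castSucc) (B i.castSucc)) →
          ¬ StrictIdx σ (A (Fin.last n)) (B (Fin.last n))) :
    ∃ w : Ω → ℝ, IsProbWeight w ∧ RegularW w ∧ RepresentsAt w ((p : ℝ) / (p + q)) σ := by
  obtain ⟨u, hu⟩ := scottWeights hSc
  have hp' : (0 : ℝ) < p := by exact_mod_cast hp
  have hq' : (0 : ℝ) < q := by exact_mod_cast hq
  have hsing : ∀ (E : Finset Ω) (x : Ω), E.Nonempty → σ E ⊆ {x} → σ E = {x} := by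
    intro E x hE hs
    have : (σ E).Nonempty := by
      rw [Finset.nonempty_iff_ne_empty]
      intro he
      exact hE.ne_empty (hS1 _ he)
    exact (Finset.Nonempty.subset_singleton_iff this).1 hs
  have hupos : ∀ a, 0 < u a := by
    intro a
    have := (hu ({a}, ∅)).1 ⟨a, rfl, by simp, by
      rw [Finset.empty_union]
      exact hsing {a} a (by simp) (hS2 _)⟩
    simp [mea] at this
    exact pos_of_mul_pos_right this hq'.le
  set Z : ℝ := ∑ ω, u ω with hZ
  have hZpos : 0 < Z := Finset.sum_pos (fun i _ => hupos i) Finset.univ_nonempty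
  let w : Ω → ℝ := fun ω => u ω / Z
  have hw : ∀ a, 0 < w a := fun a => div_pos (hupos a) hZpos
  have hmw : ∀ X, mea w X = mea u X / Z := by
    intro X
    simp only [mea, w, Finset.sum_div]
  have hcmp : ∀ (a : Ω) (B : Finset Ω), a ∉ B →
      (σ (B ∪ {a}) = {a} ↔ p * mea w B < q * w a) := by
    intro a B ha
    have hscale : p * mea w B < q * w a ↔ p * mea u B < q * u a := by
      rw [hmw]
      simp only [w]
      rw [← mul_div_assoc, ← mul_div_assoc, div_lt_div_iff_of_pos_right hZpos]
    rw [hscale]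
    constructor
    · intro h
      have := (hu ({a}, B)).1 ⟨a, rfl, ha, h⟩
      simpa [mea] using this
    · intro h
      by_contra hne
      by_cases hst : StrictIdx σ B {a}
      · have hb := (hu (B, {a})).1 hst
        simp only [mea, Finset.sum_singleton] at hb h
        have hBpos : 0 ≤ ∑ ω ∈ B, u ω := Finset.sum_nonneg fun i _ => (hupos i).le
        have h1 : (p : ℝ) * u a < p * u a := by
          calc (p : ℝ) * u a < q * ∑ ω ∈ B, u ω := hb
            _ ≤ p * ∑ ω ∈ B, u ω := by gcongr
            _ < q * u a := h
            _ ≤ p * u a := by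
              have := (hupos a).le
              gcongr
        exact lt_irrefl _ h1
      · have := (hu (B, {a})).2 ⟨hst, a, rfl, Or.inr hne⟩
        simp only [mea, Finset.sum_singleton] at this h
        linarith
  refine ⟨w, ⟨fun a => (hw a).le, ?_⟩, ?_, ?_⟩
  · simp only [w]
    rw [← Finset.sum_div, ← hZ, div_self hZpos.ne']
  · intro X hX
    by_contra hne
    have := mea_pos' hw (Finset.nonempty_iff_ne_empty.2 hne)
    linarith
  · rw [sel_spec hw hp hq]
    refine ⟨Finset.subset_empty.1 (hS2 ∅), fun E hE => ⟨hS2 E, ?_, ?_, ?_⟩⟩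
    · rw [Finset.nonempty_iff_ne_empty]
      intro he
      exact hE.ne_empty (hS1 _ he)
    · intro x hx
      rw [← hcmp x _ (by simp [hx])]
      have hxE := hS2 E hx
      have h1 : E ∩ (E \ σ E ∪ {x}) = E \ σ E ∪ {x} := by
        ext a
        simp only [mem_inter, mem_union, mem_sdiff, mem_singleton]
        constructor
        · tauto
        · rintro (h | rfl) <;> tauto
      have h2 : σ E ∩ (E \ σ E ∪ {x}) = {x} := by
        ext a
        simp only [mem_inter, mem_union, mem_sdiff, mem_singleton]
        constructor
        · tauto
        · rintro rfl; tauto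
      have h3 := hS3 E (E \ σ E ∪ {x}) (by rw [h2]; simp)
      rw [h1, h2] at h3
      exact hsing _ x ⟨x, by simp⟩ h3
    · intro X hX hne hlt
      obtain ⟨n, hn⟩ : ∃ n, Fintype.card X = n + 1 := by
        have : 0 < Fintype.card X := by
          rw [Fintype.card_coe]; exact hne.card_pos
        exact ⟨Fintype.card X - 1, by omega⟩
      let e : X ≃ Fin (n + 1) := Fintype.equivFinOfCardEq hn
      have hU : univ.biUnion (fun i => ({(e.symm i : Ω)} : Finset Ω)) = X := by
        ext a
        simp only [mem_biUnion, mem_univ, true_and, mem_singleton]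
        constructor
        · rintro ⟨i, rfl⟩
          exact (e.symm i).2
        · intro ha
          exact ⟨e ⟨a, ha⟩, by simp⟩
      have h1 := hS4 n (E \ X) (fun i => {(e.symm i : Ω)}) (fun i =>
        (hcmp _ _ (by simp)).2 (hlt _ (e.symm i).2))
      rw [hU, Finset.sdiff_union_of_subset hX] at h1
      exact h1

/-- Representation theorem for rational thresholds, Theorem `GENREPSEL`:
for a rational threshold `t = p/(p+q) ∈ [1/2, 1)`, a selection function is represented by
some regular probability measure for threshold `t` iff it satisfies (S1), (S2), (S3), (S4ₙ)
and the axiom (Scott[t]). -/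
theorem stmt19 [Fintype Ω] [DecidableEq Ω] [Nonempty Ω]
    (σ : Finset Ω → Finset Ω) (p q : ℕ) (hp : 0 < p) (hq : 0 < q)
    (t : ℝ) (ht : t = (p : ℝ) / ((p : ℝ) + (q : ℝ)))
    (ht0 : 1 / 2 ≤ t) (ht1 : t < 1) :
    (∃ w : Ω → ℝ, IsProbWeight w ∧ RegularW w ∧ RepresentsAt w t σ) ↔
      (SelA1 σ ∧ SelA2 σ ∧ SelA3 σ ∧ SelA4 σ ∧
        (∀ n : ℕ, ∀ A B : Fin (n + 1) → Finset Ω, TBalanced σ p q A B →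
          (∀ i : Fin n, geStar σ (A i.castSucc) (B i.castSucc)) →
          ¬ StrictIdx σ (A (Fin.last n)) (B (Fin.last n)))) := by
  have hpq : q ≤ p := by
    have hs : (0 : ℝ) < p + q := by positivity
    rw [ht, div_le_div_iff₀ two_pos hs] at ht0
    have : (q : ℝ) ≤ p := by linarith
    exact_mod_cast this
  subst ht
  constructor
  · rintro ⟨w, ⟨hw0, hw1⟩, hreg, hR⟩
    have hw : ∀ ω, 0 < w ω := by
      intro ω
      refine lt_of_le_of_ne (hw0 ω) fun he => ?_
      have := hreg {ω} (by simp [mea, ← he])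
      simp at this
    exact forwardDir hw hp hq hpq hR
  · rintro ⟨hS1, hS2, hS3, hS4, hSc⟩
    exact backwardDir hp hq hpq hS1 hS2 hS3 hS4 hSc
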